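/- arXiv:2303.03022 — 3 statements merged into one kernel-verified Lean document; each statement's English description precedes it below -/
import Mathlib

section
/- Let X be a nonzero complex Banach space and T a bounded linear operator on X such that every λ ∈ ℂ with |λ| > 1 belongs to the resolvent set of T and ‖(λ−1)(λ−T)⁻¹‖ ≤ K for all such λ, where K ≥ 1. Then the spectrum of T is contained in a sector centred at 1, open to the left, of half-angle arctan(√(K²−1)): every z ∈ σ(T) satisfies Re z ≤ 1 and |Im z| ≤ √(K²−1)·(1 − Re z). -/
/-!
If `z` lies in the spectrum and `l` in the resolvent set, the Neumann series gives
`1 ≤ |l - z| * ‖R(l)‖`, so the Ritt condition yields `|l - 1| ≤ K * |l - z|`. Along the line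
`l = 1 + i t` this says that a real quadratic polynomial in `t` is nonnegative, and the sign of its
discriminant is the inequality `(Im z)² ≤ (K² - 1) * (1 - Re z)²`.
-/

section Resolvent

lemma one_sub_smul_resolvent_mul {R A : Type*} [CommRing R] [Ring A] [Algebra R A] {a : A} {l : R}
    (hl : l ∈ resolventSet R a) (z : R) :
    (1 - (l - z) • resolvent a l) * (algebraMap R A l - a) = algebraMap R A z - a := by
  have hinv : resolvent a l * (algebraMap R A l - a) = 1 := Ring.inverse_mul_cancel _ hl
  rw [sub_mul, smul_mul_assoc, hinv, one_mul, ← Algebra.algebraMap_eq_smul_one, map_sub]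
  abel

variable {𝕜 A : Type*} [NormedField 𝕜] [NormedRing A] [HasSummableGeomSeries A]
  [NormedAlgebra 𝕜 A] {a : A} {l z : 𝕜}

lemma one_le_norm_sub_mul_norm_resolvent (hl : l ∈ resolventSet 𝕜 a) (hz : z ∈ spectrum 𝕜 a) :
    1 ≤ ‖l - z‖ * ‖resolvent a l‖ := by
  by_contra! hlt
  rw [← norm_smul] at hlt
  have hunit : IsUnit (algebraMap 𝕜 A z - a) :=
    one_sub_smul_resolvent_mul hl z ▸ (isUnit_one_sub_of_norm_lt_one hlt).mul hl
  exact hz hunit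

lemma norm_sub_le_mul_norm_sub_of_norm_smul_resolvent_le {c : 𝕜} {K : ℝ}
    (hl : l ∈ resolventSet 𝕜 a) (hK : ‖(l - c) • resolvent a l‖ ≤ K) (hz : z ∈ spectrum 𝕜 a) :
    ‖l - c‖ ≤ K * ‖l - z‖ :=
  calc ‖l - c‖ ≤ ‖l - c‖ * (‖l - z‖ * ‖resolvent a l‖) :=
        le_mul_of_one_le_right (norm_nonneg _) (one_le_norm_sub_mul_norm_resolvent hl hz)
    _ = ‖(l - c) • resolvent a l‖ * ‖l - z‖ := by rw [norm_smul]; ring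
    _ ≤ K * ‖l - z‖ := by gcongr

end Resolvent

section Plane

open Complex

lemma im_sq_le_of_forall_abs_le_mul_norm_sub {K : ℝ} {w : ℂ}
    (h : ∀ t : ℝ, t ≠ 0 → |t| ≤ K * ‖t * I - w‖) :
    w.im ^ 2 ≤ (K ^ 2 - 1) * w.re ^ 2 := by
  have hK : K ≠ 0 := by
    rintro rfl
    have habsurd : (1 : ℝ) ≤ 0 := by simpa using h 1 one_ne_zero
    linarith
  have hquad (t : ℝ) : 0 ≤ (K ^ 2 - 1) * (t * t) + (-2 * K ^ 2 * w.im) * t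
      + K ^ 2 * (w.re ^ 2 + w.im ^ 2) := by
    rcases eq_or_ne t 0 with rfl | ht
    · simp only [mul_zero, zero_add]
      positivity
    have hnorm : ‖t * I - w‖ ^ 2 = w.re ^ 2 + (t - w.im) ^ 2 := by
      rw [Complex.sq_norm, normSq_apply]
      simp only [sub_re, sub_im, re_ofReal_mul, im_ofReal_mul, I_re, I_im]
      ring
    have hsq : t ^ 2 ≤ K ^ 2 * (w.re ^ 2 + (t - w.im) ^ 2) := by
      rw [← hnorm, ← mul_pow, ← sq_abs t]
      exact pow_le_pow_left₀ (abs_nonneg t) (h t ht) 2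
    linarith
  have hdiscrim := discrim_le_zero hquad
  rw [discrim] at hdiscrim
  refine le_of_mul_le_mul_left ?_ (by positivity : 0 < K ^ 2)
  linarith

lemma abs_im_le_of_forall_abs_le_mul_norm_sub {K : ℝ} {w : ℂ}
    (h : ∀ t : ℝ, t ≠ 0 → |t| ≤ K * ‖t * I - w‖) :
    |w.im| ≤ √(K ^ 2 - 1) * |w.re| :=
  calc |w.im| ≤ √((K ^ 2 - 1) * w.re ^ 2) :=
        Real.abs_le_sqrt (im_sq_le_of_forall_abs_le_mul_norm_sub h)
    _ = √(K ^ 2 - 1) * |w.re| := by rw [Real.sqrt_mul' _ (sq_nonneg _), Real.sqrt_sq_eq_abs]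

lemma one_lt_norm_of_re_eq_one {l : ℂ} (hre : l.re = 1) (hne : l ≠ 1) : 1 < ‖l‖ := by
  have him : l.im ≠ 0 := fun him ↦ hne (Complex.ext hre him)
  calc 1 = |l.re| := by rw [hre, abs_one]
    _ < ‖l‖ := abs_re_lt_norm.2 him

end Plane

section BanachAlgebra

variable {A : Type*} [NormedRing A] [HasSummableGeomSeries A] [NormedAlgebra ℂ A]

lemma abs_im_sub_le_of_norm_smul_resolvent_le {a : A} {c z : ℂ} {K : ℝ}
    (hline : ∀ l : ℂ, l.re = c.re → l ≠ c →
      l ∈ resolventSet ℂ a ∧ ‖(l - c) • resolvent a l‖ ≤ K)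
    (hz : z ∈ spectrum ℂ a) :
    |(z - c).im| ≤ √(K ^ 2 - 1) * |(z - c).re| := by
  refine abs_im_le_of_forall_abs_le_mul_norm_sub fun t ht ↦ ?_
  obtain ⟨hl, hK⟩ := hline (c + t * Complex.I) (by simp) (by simpa using ht)
  have hbound := norm_sub_le_mul_norm_sub_of_norm_smul_resolvent_le hl hK hz
  calc |t| = ‖c + t * Complex.I - c‖ := by simp
    _ ≤ K * ‖c + t * Complex.I - z‖ := hbound
    _ = K * ‖t * Complex.I - (z - c)‖ := by congr 2; ring

theorem stmt_2_general (a : A) (K : ℝ)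
    (hhalf : ∀ l : ℂ, 1 < l.re → l ∈ resolventSet ℂ a)
    (hline : ∀ l : ℂ, l.re = 1 → l ≠ 1 →
      l ∈ resolventSet ℂ a ∧ ‖(l - 1) • resolvent a l‖ ≤ K) :
    ∀ z ∈ spectrum ℂ a, z.re ≤ 1 ∧ |z.im| ≤ √(K ^ 2 - 1) * (1 - z.re) := by
  intro z hz
  have hre : z.re ≤ 1 := not_lt.1 fun hlt ↦ hz (hhalf z hlt)
  have habs := abs_im_sub_le_of_norm_smul_resolvent_le (c := 1) hline hz
  rw [Complex.sub_im, Complex.sub_re, Complex.one_im, Complex.one_re, sub_zero, abs_sub_comm,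
    abs_of_nonneg (sub_nonneg.2 hre)] at habs
  exact ⟨hre, habs⟩

end BanachAlgebra

/-- The spectrum of a Ritt operator with constant `K ≥ 1` lies in a sector centred at `1`,
open to the left, of half-angle `arctan √(K²−1)`: every `z ∈ σ(T)` satisfies `Re z ≤ 1`
and `|Im z| ≤ √(K²−1)·(1 − Re z)`. -/
theorem stmt_2 {X : Type*} [NormedAddCommGroup X] [NormedSpace ℂ X] [CompleteSpace X]
    [Nontrivial X] (T : X →L[ℂ] X) (K : ℝ) (hK : 1 ≤ K)
    (hRitt : ∀ l : ℂ, 1 < ‖l‖ →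
      l ∈ resolventSet ℂ T ∧ ‖(l - 1) • resolvent T l‖ ≤ K) :
    ∀ z ∈ spectrum ℂ T, z.re ≤ 1 ∧ |z.im| ≤ Real.sqrt (K ^ 2 - 1) * (1 - z.re) :=
  stmt_2_general T K (fun l hl ↦ (hRitt l (hl.trans_le (Complex.re_le_norm l))).1)
    fun l hre hne ↦ hRitt l (one_lt_norm_of_re_eq_one hre hne)
end

section
/- Let X be a nonzero complex Banach space and T a bounded linear operator on X such that every λ ∈ ℂ with |λ| > 1 belongs to the resolvent set of T and ‖(λ−1)(λ−T)⁻¹‖ ≤ K for all such λ. Then every point z₀ of the unit circle with z₀ ≠ 1 lies in the resolvent set of T; in particular the operators Id + T and Id + T + T² are invertible in B(X). -/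
/-!
If `(l - 1) (l - T)⁻¹` stays bounded as `l` tends to `z ≠ 1` inside the resolvent set, then
`‖z - l‖ ‖(l - T)⁻¹‖ → 0`, so `z` enters the disc around `l` on which the Neumann series of the
resolvent converges. Every point of the unit circle is such a limit of points `l` with `‖l‖ > 1`.

By spectral mapping, `1 + T + ⋯ + T ^ (n - 1)` is invertible as soon as every `n`-th root of unity
other than `1` lies in the resolvent set; the cases `n = 2` and `n = 3` give `1 + T` and
`1 + T + T²`.
-/

open Filter Finset Polynomial Topology

section Resolvent

variable {𝕜 A : Type*} [NormedField 𝕜] [NormedRing A] [NormedAlgebra 𝕜 A]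
  [HasSummableGeomSeries A] {a : A} {l z : 𝕜}

theorem mem_resolventSet_of_norm_sub_mul_norm_resolvent_lt_one (hl : l ∈ resolventSet 𝕜 a)
    (h : ‖l - z‖ * ‖resolvent a l‖ < 1) : z ∈ resolventSet 𝕜 a := by
  have hunit : IsUnit (1 - (l - z) • resolvent a l) :=
    isUnit_one_sub_of_norm_lt_one ((norm_smul _ _).trans_lt h)
  have hfactor : algebraMap 𝕜 A z - a
      = (algebraMap 𝕜 A l - a) * (1 - (l - z) • resolvent a l) := by
    rw [mul_sub, mul_one, mul_smul_comm, resolvent, Ring.mul_inverse_cancel _ hl,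
      ← Algebra.algebraMap_eq_smul_one, map_sub]
    abel
  rw [spectrum.mem_resolventSet_iff, hfactor]
  exact (spectrum.mem_resolventSet_iff.1 hl).mul hunit

theorem mem_resolventSet_of_frequently_norm_smul_resolvent_le {f : 𝕜 → 𝕜} {K : ℝ}
    (hf : ContinuousAt f z) (hfz : f z ≠ 0)
    (hK : ∃ᶠ l in 𝓝 z, l ∈ resolventSet 𝕜 a ∧ ‖f l • resolvent a l‖ ≤ K) :
    z ∈ resolventSet 𝕜 a := by
  have hsmall : Tendsto (fun l ↦ ‖l - z‖ * K) (𝓝 z) (𝓝 0) :=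
    Continuous.tendsto' (by fun_prop) _ _ (by simp)
  have hlt : ∀ᶠ l in 𝓝 z, ‖l - z‖ * K < ‖f l‖ :=
    hsmall.eventually_lt hf.norm (norm_pos_iff.2 hfz)
  obtain ⟨l, ⟨hl, hbound⟩, hlK⟩ := (hK.and_eventually hlt).exists
  refine mem_resolventSet_of_norm_sub_mul_norm_resolvent_lt_one hl ?_
  refine lt_of_mul_lt_mul_right ?_ (norm_nonneg (f l))
  calc ‖l - z‖ * ‖resolvent a l‖ * ‖f l‖
      = ‖l - z‖ * ‖f l • resolvent a l‖ := by rw [norm_smul]; ring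
    _ ≤ ‖l - z‖ * K := by gcongr
    _ < 1 * ‖f l‖ := by rwa [one_mul]

end Resolvent

theorem frequently_nhds_lt_norm {E : Type*} [SeminormedAddCommGroup E] [NormedSpace ℝ E] {r : ℝ}
    (hr : r ≠ 0) {z : E} (hz : r ≤ ‖z‖) : ∃ᶠ x in 𝓝 z, r < ‖x‖ := by
  have hclosure : z ∈ closure (Metric.closedBall (0 : E) r)ᶜ := by
    rw [closure_compl, interior_closedBall 0 hr]
    simpa using hz
  simpa using mem_closure_iff_frequently.1 hclosure

theorem mem_resolventSet_of_norm_sub_one_smul_resolvent_le {𝕜 A : Type*} [RCLike 𝕜] [NormedRing A]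
    [NormedAlgebra 𝕜 A] [HasSummableGeomSeries A] {a : A} {K : ℝ}
    (hK : ∀ l : 𝕜, 1 < ‖l‖ → l ∈ resolventSet 𝕜 a ∧ ‖(l - 1) • resolvent a l‖ ≤ K)
    {z : 𝕜} (hz : 1 ≤ ‖z‖) (hz1 : z ≠ 1) : z ∈ resolventSet 𝕜 a :=
  mem_resolventSet_of_frequently_norm_smul_resolvent_le (f := (· - 1)) (by fun_prop)
    (sub_ne_zero.2 hz1) ((frequently_nhds_lt_norm one_ne_zero hz).mono hK)

section SpectralMapping

variable {𝕜 A : Type*} [Field 𝕜] [Ring A] [Algebra 𝕜 A] {a : A}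

theorem isUnit_aeval_of_isRoot_mem_resolventSet {p : 𝕜[X]} (hp : p.Splits) (hp0 : p ≠ 0)
    (h : ∀ z, p.IsRoot z → z ∈ resolventSet 𝕜 a) : IsUnit (aeval a p) := by
  have hlead : IsUnit (aeval a (C p.leadingCoeff)) :=
    (isUnit_C.2 (leadingCoeff_ne_zero.2 hp0).isUnit).map (aeval a)
  rw [hp.eq_prod_roots, map_mul]
  refine hlead.mul ?_
  by_contra hprod
  obtain ⟨z, hspec, hroot⟩ := spectrum.exists_mem_of_not_isUnit_aeval_prod hprod
  exact hspec (h z hroot)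

theorem isUnit_geom_sum_of_pow_eq_one_mem_resolventSet [IsAlgClosed 𝕜] {n : ℕ} (hn : (n : 𝕜) ≠ 0)
    (h : ∀ z : 𝕜, z ^ n = 1 → z ≠ 1 → z ∈ resolventSet 𝕜 a) :
    IsUnit (∑ i ∈ range n, a ^ i) := by
  set p : 𝕜[X] := ∑ i ∈ range n, X ^ i with hp
  have heval_one : p.eval 1 ≠ 0 := by simpa [hp, eval_geom_sum] using hn
  have hp0 : p ≠ 0 := fun h0 ↦ heval_one (by rw [h0, eval_zero])
  have haeval : aeval a p = ∑ i ∈ range n, a ^ i := by simp [hp]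
  rw [← haeval]
  refine isUnit_aeval_of_isRoot_mem_resolventSet (IsAlgClosed.splits p) hp0 fun z hz ↦ h z ?_ ?_
  · have hsum : ∑ i ∈ range n, z ^ i = 0 := eval_geom_sum.symm.trans hz
    rw [← sub_eq_zero, ← geom_sum_mul, hsum, zero_mul]
  · rintro rfl
    exact heval_one hz

end SpectralMapping

theorem stmt_4_general {A : Type*} [NormedRing A] [NormedAlgebra ℂ A] [HasSummableGeomSeries A]
    (T : A) (K : ℝ)
    (hRitt : ∀ l : ℂ, 1 < ‖l‖ →
      l ∈ resolventSet ℂ T ∧ ‖(l - 1) • resolvent T l‖ ≤ K) :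
    (∀ z₀ : ℂ, ‖z₀‖ = 1 → z₀ ≠ 1 → z₀ ∈ resolventSet ℂ T) ∧
    ∀ n : ℕ, n ≠ 0 → IsUnit (∑ i ∈ range n, T ^ i) := by
  have hcircle (z : ℂ) (hz : ‖z‖ = 1) (hz1 : z ≠ 1) : z ∈ resolventSet ℂ T :=
    mem_resolventSet_of_norm_sub_one_smul_resolvent_le hRitt hz.ge hz1
  exact ⟨hcircle, fun n hn ↦ isUnit_geom_sum_of_pow_eq_one_mem_resolventSet (Nat.cast_ne_zero.2 hn)
    fun z hz ↦ hcircle z (Complex.norm_eq_one_of_pow_eq_one hz hn)⟩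

/-- Every point of the unit circle other than `1` lies in the resolvent set of a Ritt
operator; in particular `Id + T` and `Id + T + T²` are invertible in `B(X)`. -/
theorem stmt_4 {X : Type*} [NormedAddCommGroup X] [NormedSpace ℂ X] [CompleteSpace X]
    [Nontrivial X] (T : X →L[ℂ] X) (K : ℝ)
    (hRitt : ∀ l : ℂ, 1 < ‖l‖ →
      l ∈ resolventSet ℂ T ∧ ‖(l - 1) • resolvent T l‖ ≤ K) :
    (∀ z₀ : ℂ, ‖z₀‖ = 1 → z₀ ≠ 1 → z₀ ∈ resolventSet ℂ T) ∧
    IsUnit (1 + T) ∧ IsUnit (1 + T + T ^ 2) := by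
  obtain ⟨hcircle, hsum⟩ := stmt_4_general T K hRitt
  exact ⟨hcircle, by simpa [sum_range_succ] using hsum 2, by simpa [sum_range_succ] using hsum 3⟩
end

section
/- Let X be a nonzero complex Banach space and T a bounded linear operator on X. Then T is a Ritt operator (i.e. every λ with |λ| > 1 is in the resolvent set of T and sup_{|λ|>1} ‖(λ−1)(λ−T)⁻¹‖ < ∞) if and only if the following two conditions hold simultaneously: (PB) there is C₁ > 0 with ‖Tⁿ‖ ≤ C₁ for all n ≥ 0 (power-boundedness), and (DD) there is C₂ > 0 with ‖k·T^{k−1}(Id − T)‖ ≤ C₂ for all k ≥ 1 (the discrete derivative condition). -/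
/-!
Put `S(z) = (1 - zT)⁻¹`. In the variable `z = 1/λ` the Ritt condition says that
`‖(1 - z) S(z)‖ ≤ K` for `0 < |z| < 1`.

*Ritt implies (PB) and (DD).* By the Ritt condition and `z S(z) (1 - T) = 1 - (1 - z) S(z)`, both
`z S(z)² = z ∑ (n + 1) zⁿ Tⁿ` and `z S(z)³ (1 - T) = z ∑ C(n + 2, 2) zⁿ Tⁿ (1 - T)` are
`O(|1 - z|⁻²)`. The mean of `|1 - z|⁻²` over `|z| = r` is `1 / (1 - r²)`, so the `L¹` Cauchy
estimate on the circle of radius `r = 1 - 1/(n + 2)` bounds the `n`-th coefficients by `O(n)`. It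
remains to divide by `n + 1` and by `C(n + 2, 2)`. Raising the resolvent to a power plays the role
of integrating by parts in the Dunford integral and keeps the contour inside the unit disc.

*(PB) and (DD) imply Ritt.* Expanding `N` terms of the geometric series gives
`(1 - z) S(z) = (1 - z) ∑_{n < N} zⁿ Tⁿ + zᴺ Tᴺ - zᴺ⁺¹ S(z) Tᴺ (1 - T)`, whence
`‖(1 - z) S(z)‖ ≤ N |1 - z| C₁ + C₁ + C₂ / (N + 1) ‖S(z)‖`. For `N = ⌊2 C₂ / |1 - z|⌋` the last term
is at most half of the left-hand side and can be absorbed.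
-/

open Filter Finset Metric Real Topology
open scoped Ring

section CauchyEstimates

theorem circleAverage_inv_norm_sub_sq {c w : ℂ} {R : ℝ} (hw : |R| < ‖w - c‖) :
    circleAverage (fun z ↦ (‖w - z‖ ^ 2)⁻¹) c R = (‖w - c‖ ^ 2 - R ^ 2)⁻¹ := by
  have hne : ∀ z ∈ closedBall c |R|, (w - c) - (z - c) ≠ 0 := by
    rintro z hz h
    rw [sub_eq_zero.mp h, ← dist_eq_norm] at hw
    exact hw.not_ge hz
  have hdiff : DifferentiableOn ℂ (herglotzRieszKernel c · w) (closedBall c |R|) := by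
    unfold herglotzRieszKernel
    fun_prop (disch := exact hne _ ‹_›)
  -- As a function of its second argument, the Poisson kernel is the real part of a function that is
  -- holomorphic on the closed disc and equal to `1` at its centre.
  have hmean : circleAverage (poissonKernel c · w) c R = 1 := by
    have hwc : w - c ≠ 0 := norm_pos_iff.mp ((abs_nonneg R).trans_lt hw)
    have hint : CircleIntegrable (herglotzRieszKernel c · w) c R :=
      (hdiff.continuousOn.mono sphere_subset_closedBall).circleIntegrable'
    have h := Complex.reCLM.circleAverage_comp_comm hint
    rw [(hdiff.mono closure_ball_subset_closedBall).diffContOnCl.circleAverage] at h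
    simpa [poissonKernel_eq_re_herglotzRieszKernel, herglotzRieszKernel_def, hwc,
      Function.comp_def] using h
  have hpos : 0 < ‖w - c‖ ^ 2 - R ^ 2 := by
    rw [sub_pos, ← sq_abs R]
    gcongr
  have hker : Set.EqOn (poissonKernel c · w)
      ((‖w - c‖ ^ 2 - R ^ 2) • fun z ↦ (‖w - z‖ ^ 2)⁻¹) (sphere c |R|) := by
    intro z hz
    simp [poissonKernel_def, mem_sphere_iff_norm.mp hz, div_eq_mul_inv]
  rw [circleAverage_congr_sphere hker, circleAverage_smul, smul_eq_mul] at hmean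
  exact eq_inv_of_mul_eq_one_right hmean

variable {E : Type*} [NormedAddCommGroup E] [NormedSpace ℂ E] [CompleteSpace E]
  {F : ℂ → E} {p : FormalMultilinearSeries ℂ ℂ E}

theorem norm_mul_pow_le_circleAverage_norm {c : ℂ} {R : ℝ} (hR : 0 < R)
    (hF : DiffContOnCl ℂ F (ball c R)) (hp : HasFPowerSeriesAt F p c) (n : ℕ) :
    ‖p n‖ * R ^ n ≤ circleAverage (fun z ↦ ‖F z‖) c R := by
  lift R to NNReal using hR.le
  rw [hp.eq_formalMultilinearSeries (hF.hasFPowerSeriesOnBall hR).hasFPowerSeriesAt,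
    ← le_div_iff₀ (by positivity), div_eq_mul_inv, ← inv_pow]
  simpa [circleAverage_def] using norm_cauchyPowerSeries_le F c R n

theorem norm_mul_pow_succ_le_of_norm_smul_le {M r : ℝ} (hr₀ : 0 < r) (hr₁ : r < 1)
    (hF : DifferentiableOn ℂ F (ball 0 1)) (hp : HasFPowerSeriesAt F p 0)
    (hM : ∀ z ≠ 0, ‖z‖ < 1 → ‖z • F z‖ ≤ M * (‖1 - z‖ ^ 2)⁻¹) (n : ℕ) :
    ‖p n‖ * r ^ (n + 1) ≤ M * (1 - r ^ 2)⁻¹ := by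
  have hr : |r| < ‖(1 : ℂ) - 0‖ := by simpa [abs_of_pos hr₀] using hr₁
  have hsub : closedBall (0 : ℂ) r ⊆ ball 0 1 := closedBall_subset_ball hr₁
  have hbound : ∀ z ∈ sphere (0 : ℂ) |r|, ‖F z‖ ≤ M / r * (‖1 - z‖ ^ 2)⁻¹ := by
    intro z hz
    have hzr : ‖z‖ = r := by simpa [abs_of_pos hr₀] using hz
    have h := hM z (norm_pos_iff.mp (hzr ▸ hr₀)) (hzr ▸ hr₁)
    rw [norm_smul, hzr, ← le_div_iff₀' hr₀] at h
    rwa [div_mul_eq_mul_div]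
  have hint₁ : CircleIntegrable (fun z ↦ ‖F z‖) 0 r :=
    (hF.continuousOn.norm.mono (sphere_subset_closedBall.trans hsub)).circleIntegrable hr₀.le
  have hint₂ : CircleIntegrable (fun z ↦ M / r * (‖1 - z‖ ^ 2)⁻¹) 0 r := by
    refine ContinuousOn.circleIntegrable' (continuousOn_const.mul ?_)
    refine ContinuousOn.inv₀ (by fun_prop) fun z hz h ↦ hr.ne' ?_
    rw [pow_eq_zero_iff two_ne_zero, norm_sub_eq_zero_iff] at h
    rw [h]
    exact mem_sphere_iff_norm.mp hz
  have hcauchy : ‖p n‖ * r ^ n ≤ M / r * (1 - r ^ 2)⁻¹ := by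
    calc ‖p n‖ * r ^ n
        ≤ circleAverage (fun z ↦ ‖F z‖) 0 r :=
          norm_mul_pow_le_circleAverage_norm hr₀
            (hF.mono (closure_ball_subset_closedBall.trans hsub)).diffContOnCl hp n
      _ ≤ circleAverage (fun z ↦ (M / r) • (‖1 - z‖ ^ 2)⁻¹) 0 r :=
          circleAverage_mono hint₁ hint₂ hbound
      _ = M / r * (1 - r ^ 2)⁻¹ := by
          rw [circleAverage_fun_smul, circleAverage_inv_norm_sub_sq hr]
          simp
  rwa [div_mul_eq_mul_div, le_div_iff₀ hr₀, mul_assoc, ← pow_succ] at hcauchy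

theorem norm_le_of_norm_smul_le_inv_norm_one_sub_sq {M : ℝ}
    (hF : DifferentiableOn ℂ F (ball 0 1)) (hp : HasFPowerSeriesAt F p 0)
    (hM : ∀ z ≠ 0, ‖z‖ < 1 → ‖z • F z‖ ≤ M * (‖1 - z‖ ^ 2)⁻¹) (n : ℕ) :
    ‖p n‖ ≤ exp 1 * M * (n + 2) := by
  obtain ⟨r, hr⟩ : ∃ r : ℝ, r = (n + 1) / (n + 2) := ⟨_, rfl⟩
  have hr₀ : 0 < r := by rw [hr]; positivity
  have hgap : 1 - r = (n + 2 : ℝ)⁻¹ := by rw [hr]; field_simp; ring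
  have hr₁ : r < 1 := by
    have : (0 : ℝ) < (n + 2 : ℝ)⁻¹ := by positivity
    linarith
  have hpow : (r ^ (n + 1))⁻¹ ≤ exp 1 := by
    have h : r⁻¹ = 1 + ((n + 1 : ℕ) : ℝ)⁻¹ := by rw [hr]; push_cast; field_simp; ring
    rw [← inv_pow, h]
    exact one_add_inv_pow_le_exp
  have hinv : (1 - r ^ 2)⁻¹ ≤ (n + 2 : ℝ) := by
    refine inv_le_of_inv_le₀ (by positivity) ?_
    rw [← hgap]
    nlinarith
  have hcoeff := norm_mul_pow_succ_le_of_norm_smul_le hr₀ hr₁ hF hp hM n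
  have hM₀ : 0 ≤ M :=
    nonneg_of_mul_nonneg_left ((by positivity : 0 ≤ ‖p n‖ * r ^ (n + 1)).trans hcoeff)
      (inv_pos.mpr (by nlinarith))
  calc ‖p n‖ ≤ M * (1 - r ^ 2)⁻¹ * (r ^ (n + 1))⁻¹ := by
        rwa [← div_eq_mul_inv _ (r ^ (n + 1)), le_div_iff₀ (by positivity)]
    _ ≤ M * (n + 2) * exp 1 := by gcongr
    _ = exp 1 * M * (n + 2) := by ring

end CauchyEstimates

section ResolventAlgebra

variable {𝕜 A : Type*} [Ring A]

section Field

variable [Field 𝕜] [Algebra 𝕜 A] {T : A} {l : 𝕜}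

theorem mem_resolventSet_iff_isUnit_one_sub_inv_smul (hl : l ≠ 0) :
    l ∈ resolventSet 𝕜 T ↔ IsUnit (1 - l⁻¹ • T) := by
  rw [spectrum.mem_resolventSet_iff, Algebra.algebraMap_eq_smul_one]
  exact IsUnit.smul_sub_iff_sub_inv_smul (r := Units.mk0 l hl) (a := T)

theorem sub_one_smul_resolvent_eq (hl : l ≠ 0) :
    (l - 1) • resolvent T l = (1 - l⁻¹) • (1 - l⁻¹ • T)⁻¹ʳ := by
  have h : l • resolvent T l = (1 - l⁻¹ • T)⁻¹ʳ := by
    simpa [resolvent, Units.smul_def] using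
      spectrum.units_smul_resolvent_self (r := Units.mk0 l hl) (a := T)
  rw [← h, smul_smul, sub_mul, one_mul, inv_mul_cancel₀ hl]

end Field

variable [CommRing 𝕜] [Algebra 𝕜 A] {T : A} {z : 𝕜}

theorem smul_inverse_mul_one_sub (hz : IsUnit (1 - z • T)) :
    z • ((1 - z • T)⁻¹ʳ * (1 - T)) = 1 - (1 - z) • (1 - z • T)⁻¹ʳ := by
  have h := Ring.inverse_mul_cancel _ hz
  rw [mul_sub, mul_one, mul_smul_comm] at h
  generalize (1 - z • T)⁻¹ʳ = S at h ⊢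
  rw [mul_sub, mul_one, smul_sub, sub_smul, one_smul, ← h]
  abel

theorem one_sub_smul_inverse_eq_sum_add_sub (hz : IsUnit (1 - z • T)) (N : ℕ) :
    (1 - z) • (1 - z • T)⁻¹ʳ = (1 - z) • ∑ n ∈ range N, (z • T) ^ n + (z • T) ^ N
      - z ^ (N + 1) • ((1 - z • T)⁻¹ʳ * (T ^ N * (1 - T))) := by
  set S := (1 - z • T)⁻¹ʳ with hS
  have hgeom : S = ∑ n ∈ range N, (z • T) ^ n + S * (z • T) ^ N := by
    have h := congrArg (S * ·) (mul_neg_geom_sum (z • T) N)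
    simp only [← mul_assoc, hS, Ring.inverse_mul_cancel _ hz, one_mul, mul_sub, mul_one] at h
    rw [h, sub_add_cancel]
  have hrem : (1 - z) • (S * (z • T) ^ N)
      = (z • T) ^ N - z ^ (N + 1) • (S * (T ^ N * (1 - T))) := by
    have hcomm : T ^ N * (1 - T) = (1 - T) * T ^ N :=
      ((Commute.one_right T).sub_right (Commute.refl T)).pow_left N
    rw [hcomm, ← mul_assoc, pow_succ', mul_smul, smul_comm, ← smul_mul_assoc z,
      smul_inverse_mul_one_sub hz, ← smul_mul_assoc, smul_pow]
    simp only [sub_mul, one_mul, smul_sub, smul_mul_assoc, mul_smul_comm, ← hS, sub_sub_cancel]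
  rw [add_sub_assoc, ← hrem, ← smul_add, ← hgeom]

end ResolventAlgebra

section NormedAlgebra

theorem hasFPowerSeriesAt_inverse_one_sub_smul_pow_mul {𝕜 A : Type*} [NontriviallyNormedField 𝕜]
    [NormedRing A] [NormedAlgebra 𝕜 A] [HasSummableGeomSeries A] (T B : A) (k : ℕ) :
    HasFPowerSeriesAt (fun z : 𝕜 ↦ (1 - z • T)⁻¹ʳ ^ (k + 1) * B)
      (fun n ↦ ContinuousMultilinearMap.mkPiRing 𝕜 (Fin n) ((n + k).choose k • (T ^ n * B)))
      0 := by
  refine hasFPowerSeriesAt_iff.mpr ?_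
  have hlim : Tendsto (fun z : 𝕜 ↦ ‖z • T‖) (𝓝 0) (𝓝 0) := by
    have hcont : Continuous (fun z : 𝕜 ↦ ‖z • T‖) := by fun_prop
    simpa using hcont.tendsto 0
  filter_upwards [hlim.eventually (gt_mem_nhds one_pos)] with z hz
  have hsum := (hasSum_choose_mul_geometric_of_norm_lt_one' k hz).mul_right B
  have hterm (n : ℕ) : z ^ n • FormalMultilinearSeries.coeff
      (fun n ↦ ContinuousMultilinearMap.mkPiRing 𝕜 (Fin n) ((n + k).choose k • (T ^ n * B))) n
        = (n + k).choose k * (z • T) ^ n * B := by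
    have hcoeff : ContinuousMultilinearMap.mkPiRing 𝕜 (Fin n) ((n + k).choose k • (T ^ n * B)) 1
        = (n + k).choose k • (T ^ n * B) := by simp
    rw [smul_pow, mul_assoc, smul_mul_assoc, ← nsmul_eq_mul, smul_comm]
    exact congrArg (z ^ n • ·) hcoeff
  simpa only [hterm, zero_add] using hsum

variable {A : Type*} [NormedRing A] [NormedAlgebra ℂ A] {T : A}

theorem norm_one_sub_smul_inverse_le {C : ℝ} {z : ℂ} (hz : ‖z‖ ≤ 1) (hu : IsUnit (1 - z • T))
    (hC : ∀ n : ℕ, ‖T ^ n‖ ≤ C) (N : ℕ) :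
    ‖(1 - z) • (1 - z • T)⁻¹ʳ‖
      ≤ N * ‖1 - z‖ * C + C + ‖T ^ N * (1 - T)‖ * ‖(1 - z • T)⁻¹ʳ‖ := by
  have hz_pow (n : ℕ) : ‖z ^ n‖ ≤ 1 := by
    rw [norm_pow]
    exact pow_le_one₀ (norm_nonneg z) hz
  have hterm (n : ℕ) : ‖(z • T) ^ n‖ ≤ C := by
    rw [smul_pow, norm_smul]
    exact (mul_le_of_le_one_left (norm_nonneg _) (hz_pow n)).trans (hC n)
  have hsum : ‖(1 - z) • ∑ n ∈ range N, (z • T) ^ n‖ ≤ N * ‖1 - z‖ * C := by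
    rw [norm_smul, mul_comm (N : ℝ), mul_assoc]
    gcongr
    simpa using norm_sum_le_of_le (range N) fun n _ ↦ hterm n
  have hrem : ‖z ^ (N + 1) • ((1 - z • T)⁻¹ʳ * (T ^ N * (1 - T)))‖
      ≤ ‖T ^ N * (1 - T)‖ * ‖(1 - z • T)⁻¹ʳ‖ := by
    rw [norm_smul, mul_comm ‖T ^ N * (1 - T)‖]
    exact (mul_le_of_le_one_left (norm_nonneg _) (hz_pow _)).trans (norm_mul_le _ _)
  rw [one_sub_smul_inverse_eq_sum_add_sub hu N]
  exact norm_sub_le_of_le (norm_add_le_of_le hsum (hterm N)) hrem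

theorem norm_smul_pow_pred_mul_one_sub_le_iff {C : ℝ} :
    (∀ k : ℕ, 1 ≤ k → ‖(k : ℂ) • (T ^ (k - 1) * (1 - T))‖ ≤ C) ↔
      ∀ n : ℕ, (n + 1) * ‖T ^ n * (1 - T)‖ ≤ C := by
  simp only [norm_smul, Complex.norm_natCast]
  refine ⟨fun h n ↦ by simpa using h (n + 1) (by lia), fun h k hk ↦ ?_⟩
  obtain ⟨n, rfl⟩ := Nat.exists_eq_add_of_le' hk
  simpa using h n

variable [CompleteSpace A]

theorem differentiableOn_inverse_one_sub_smul_pow_mul {s : Set ℂ}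
    (hu : ∀ z ∈ s, IsUnit (1 - z • T)) (B : A) (k : ℕ) :
    DifferentiableOn ℂ (fun z ↦ (1 - z • T)⁻¹ʳ ^ k * B) s := by
  intro z hz
  have hinv : DifferentiableAt ℂ (fun z : ℂ ↦ (1 - z • T)⁻¹ʳ) z :=
    DifferentiableAt.comp (g := Ring.inverse) z (differentiableAt_inverse (hu z hz)) (by fun_prop)
  exact ((hinv.pow k).mul_const B).differentiableWithinAt

theorem choose_mul_norm_pow_mul_le {B : A} {k : ℕ} {M : ℝ}
    (hu : ∀ z : ℂ, ‖z‖ < 1 → IsUnit (1 - z • T))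
    (hM : ∀ z : ℂ, z ≠ 0 → ‖z‖ < 1 →
      ‖z • ((1 - z • T)⁻¹ʳ ^ (k + 1) * B)‖ ≤ M * (‖1 - z‖ ^ 2)⁻¹) (n : ℕ) :
    (n + k).choose k * ‖T ^ n * B‖ ≤ exp 1 * M * (n + 2) := by
  have hdiff := differentiableOn_inverse_one_sub_smul_pow_mul
    (fun z hz ↦ hu z (mem_ball_zero_iff.mp hz)) B (k + 1)
  have h := norm_le_of_norm_smul_le_inv_norm_one_sub_sq hdiff
    (hasFPowerSeriesAt_inverse_one_sub_smul_pow_mul T B k) hM n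
  rwa [ContinuousMultilinearMap.norm_mkPiRing, ← Nat.cast_smul_eq_nsmul ℂ, norm_smul,
    Complex.norm_natCast] at h

theorem isUnit_one_sub_smul_of_norm_pow_le {C : ℝ} (hC : ∀ n : ℕ, ‖T ^ n‖ ≤ C) {z : ℂ}
    (hz : ‖z‖ < 1) : IsUnit (1 - z • T) := by
  rcases eq_or_ne z 0 with rfl | hz₀
  · simp
  by_contra hu
  have hspec : z⁻¹ ∈ spectrum ℂ T := fun hres ↦
    hu (by simpa using (mem_resolventSet_iff_isUnit_one_sub_inv_smul (inv_ne_zero hz₀)).mp hres)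
  have hbound (n : ℕ) : ‖z⁻¹‖ ^ n ≤ C * ‖(1 : A)‖ := by
    rw [← norm_pow]
    exact (spectrum.norm_le_norm_mul_of_mem (spectrum.pow_mem_pow T n hspec)).trans
      (mul_le_mul_of_nonneg_right (hC n) (norm_nonneg _))
  have hinv : 1 < ‖z⁻¹‖ := by
    rw [norm_inv]
    exact (one_lt_inv₀ (norm_pos_iff.mpr hz₀)).mpr hz
  obtain ⟨n, hn⟩ := pow_unbounded_of_one_lt (C * ‖(1 : A)‖) hinv
  exact hn.not_ge (hbound n)

end NormedAlgebra

section Ritt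

variable {A : Type*} [NormedRing A] [NormedAlgebra ℂ A] {K : ℝ} {T : A}

/-- `T` is a Ritt operator with constant `K`, for `T` in a normed algebra such as `X →L[ℂ] X`. -/
def IsRittWith (K : ℝ) (T : A) : Prop :=
  ∀ l : ℂ, 1 < ‖l‖ → l ∈ resolventSet ℂ T ∧ ‖(l - 1) • resolvent T l‖ ≤ K

theorem isRittWith_iff : IsRittWith K T ↔ ∀ z : ℂ, z ≠ 0 → ‖z‖ < 1 →
    IsUnit (1 - z • T) ∧ ‖(1 - z) • (1 - z • T)⁻¹ʳ‖ ≤ K := by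
  have hiff {l : ℂ} (hl : l ≠ 0) : (l ∈ resolventSet ℂ T ∧ ‖(l - 1) • resolvent T l‖ ≤ K) ↔
      IsUnit (1 - l⁻¹ • T) ∧ ‖(1 - l⁻¹) • (1 - l⁻¹ • T)⁻¹ʳ‖ ≤ K := by
    rw [mem_resolventSet_iff_isUnit_one_sub_inv_smul hl, sub_one_smul_resolvent_eq hl]
  constructor
  · intro h z hz₀ hz
    have hz' : 1 < ‖z⁻¹‖ := by
      rw [norm_inv]
      exact (one_lt_inv₀ (norm_pos_iff.mpr hz₀)).mpr hz
    simpa only [inv_inv] using (hiff (inv_ne_zero hz₀)).mp (h z⁻¹ hz')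
  · intro h l hl
    have hl₀ : l ≠ 0 := norm_pos_iff.mp (one_pos.trans hl)
    have hl' : ‖l⁻¹‖ < 1 := by
      rw [norm_inv]
      exact inv_lt_one_of_one_lt₀ hl
    exact (hiff hl₀).mpr (h l⁻¹ (inv_ne_zero hl₀) hl')

namespace IsRittWith

theorem isUnit_one_sub_smul (h : IsRittWith K T) {z : ℂ} (hz : ‖z‖ < 1) : IsUnit (1 - z • T) := by
  rcases eq_or_ne z 0 with rfl | hz₀
  · simp
  · exact (isRittWith_iff.mp h z hz₀ hz).1

theorem norm_inverse_sq_le (h : IsRittWith K T) {z : ℂ} (hz₀ : z ≠ 0) (hz : ‖z‖ < 1) :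
    ‖(1 - z • T)⁻¹ʳ ^ 2‖ ≤ K ^ 2 * (‖1 - z‖ ^ 2)⁻¹ := by
  have hsub : 0 < ‖1 - z‖ :=
    norm_pos_iff.mpr (sub_ne_zero.mpr fun h ↦ by simp [← h] at hz)
  have hS : ‖(1 - z • T)⁻¹ʳ‖ ≤ K / ‖1 - z‖ := by
    rw [le_div_iff₀' hsub, ← norm_smul]
    exact (isRittWith_iff.mp h z hz₀ hz).2
  calc ‖(1 - z • T)⁻¹ʳ ^ 2‖ ≤ ‖(1 - z • T)⁻¹ʳ‖ ^ 2 := norm_pow_le' _ two_pos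
    _ ≤ (K / ‖1 - z‖) ^ 2 := by gcongr
    _ = K ^ 2 * (‖1 - z‖ ^ 2)⁻¹ := by rw [div_pow, div_eq_mul_inv]

theorem norm_smul_inverse_mul_one_sub_le (h : IsRittWith K T) {z : ℂ} (hz₀ : z ≠ 0)
    (hz : ‖z‖ < 1) : ‖z • ((1 - z • T)⁻¹ʳ * (1 - T))‖ ≤ ‖(1 : A)‖ + K := by
  obtain ⟨hu, hK⟩ := isRittWith_iff.mp h z hz₀ hz
  rw [smul_inverse_mul_one_sub hu]
  exact norm_sub_le_of_le le_rfl hK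

variable [CompleteSpace A]

theorem norm_pow_le (h : IsRittWith K T) (n : ℕ) : ‖T ^ n‖ ≤ 2 * exp 1 * K ^ 2 := by
  have hcoeff := choose_mul_norm_pow_mul_le (B := 1) (k := 1) (M := K ^ 2)
    (fun z ↦ h.isUnit_one_sub_smul) (fun z hz₀ hz ↦ by
      rw [mul_one, norm_smul]
      exact (mul_le_of_le_one_left (norm_nonneg _) hz.le).trans (h.norm_inverse_sq_le hz₀ hz)) n
  have hgrowth : (n + 1 : ℝ) * ‖T ^ n‖ ≤ (n + 1) * (2 * exp 1 * K ^ 2) := by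
    have : 0 ≤ exp 1 * K ^ 2 * n := by positivity
    simp only [Nat.choose_one_right, mul_one, Nat.cast_add, Nat.cast_one] at hcoeff
    linarith
  exact le_of_mul_le_mul_left hgrowth (by positivity)

theorem succ_mul_norm_pow_mul_one_sub_le (h : IsRittWith K T) (n : ℕ) :
    (n + 1) * ‖T ^ n * (1 - T)‖ ≤ 2 * exp 1 * (K ^ 2 * (‖(1 : A)‖ + K)) := by
  have hcoeff := choose_mul_norm_pow_mul_le (B := 1 - T) (k := 2) (M := K ^ 2 * (‖(1 : A)‖ + K))
    (fun z ↦ h.isUnit_one_sub_smul) (fun z hz₀ hz ↦ by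
      rw [pow_succ, mul_assoc, ← mul_smul_comm, mul_right_comm]
      exact (norm_mul_le _ _).trans (mul_le_mul (h.norm_inverse_sq_le hz₀ hz)
        (h.norm_smul_inverse_mul_one_sub_le hz₀ hz) (norm_nonneg _) (by positivity))) n
  have hchoose : ((n + 2).choose 2 : ℝ) = (n + 2) * (n + 1) / 2 := by
    rw [Nat.cast_choose_two]
    push_cast
    ring
  rw [hchoose] at hcoeff
  have hgrowth : (n + 2 : ℝ) * ((n + 1) * ‖T ^ n * (1 - T)‖)
      ≤ (n + 2) * (2 * exp 1 * (K ^ 2 * (‖(1 : A)‖ + K))) := by linarith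
  exact le_of_mul_le_mul_left hgrowth (by positivity)

end IsRittWith

theorem isRittWith_of_norm_pow_le [CompleteSpace A] {C₁ C₂ : ℝ} (h₁ : ∀ n : ℕ, ‖T ^ n‖ ≤ C₁)
    (h₂ : ∀ n : ℕ, (n + 1) * ‖T ^ n * (1 - T)‖ ≤ C₂) :
    IsRittWith (2 * (2 * C₂ * C₁ + C₁)) T := by
  have hC₁ : 0 ≤ C₁ := (norm_nonneg _).trans (h₁ 0)
  have hC₂ : 0 ≤ C₂ := le_trans (by positivity) (h₂ 0)
  rw [isRittWith_iff]
  intro z _ hz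
  have hu : IsUnit (1 - z • T) := isUnit_one_sub_smul_of_norm_pow_le h₁ hz
  refine ⟨hu, ?_⟩
  have hsub : 0 < ‖1 - z‖ :=
    norm_pos_iff.mpr (sub_ne_zero.mpr fun h ↦ by simp [← h] at hz)
  set N := ⌊2 * C₂ / ‖1 - z‖⌋₊
  have hN_le : N * ‖1 - z‖ ≤ 2 * C₂ := by
    rw [← le_div_iff₀ hsub]
    exact Nat.floor_le (by positivity)
  have hN_ge : 2 * C₂ ≤ (N + 1) * ‖1 - z‖ := by
    rw [← div_le_iff₀ hsub]
    exact (Nat.lt_floor_add_one _).le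
  have hsmall : ‖T ^ N * (1 - T)‖ ≤ ‖1 - z‖ / 2 := by
    have h : (N + 1 : ℝ) * ‖T ^ N * (1 - T)‖ ≤ (N + 1) * (‖1 - z‖ / 2) := by
      linarith [h₂ N]
    exact le_of_mul_le_mul_left h (by positivity)
  have habsorb : ‖(1 - z) • (1 - z • T)⁻¹ʳ‖
      ≤ 2 * C₂ * C₁ + C₁ + ‖(1 - z) • (1 - z • T)⁻¹ʳ‖ / 2 := by
    calc ‖(1 - z) • (1 - z • T)⁻¹ʳ‖
        ≤ N * ‖1 - z‖ * C₁ + C₁ + ‖T ^ N * (1 - T)‖ * ‖(1 - z • T)⁻¹ʳ‖ :=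
          norm_one_sub_smul_inverse_le hz.le hu h₁ N
      _ ≤ 2 * C₂ * C₁ + C₁ + ‖1 - z‖ / 2 * ‖(1 - z • T)⁻¹ʳ‖ := by gcongr
      _ = 2 * C₂ * C₁ + C₁ + ‖(1 - z) • (1 - z • T)⁻¹ʳ‖ / 2 := by
          rw [norm_smul, div_mul_eq_mul_div]
  linarith

end Ritt

theorem stmt_5_general {A : Type*} [NormedRing A] [NormedAlgebra ℂ A] [CompleteSpace A] (T : A) :
    ((∀ l : ℂ, 1 < ‖l‖ → l ∈ resolventSet ℂ T) ∧
      ∃ K : ℝ, ∀ l : ℂ, 1 < ‖l‖ → ‖(l - 1) • resolvent T l‖ ≤ K) ↔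
    ((∃ C₁ : ℝ, 0 < C₁ ∧ ∀ n : ℕ, ‖T ^ n‖ ≤ C₁) ∧
      ∃ C₂ : ℝ, 0 < C₂ ∧ ∀ k : ℕ, 1 ≤ k → ‖(k : ℂ) • (T ^ (k - 1) * (1 - T))‖ ≤ C₂) := by
  simp only [norm_smul_pow_pred_mul_one_sub_le_iff]
  constructor
  · rintro ⟨hres, K, hK⟩
    have hT : IsRittWith K T := fun l hl ↦ ⟨hres l hl, hK l hl⟩
    exact ⟨⟨max 1 _, by positivity, fun n ↦ (hT.norm_pow_le n).trans (le_max_right _ _)⟩, max 1 _,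
      by positivity, fun n ↦ (hT.succ_mul_norm_pow_mul_one_sub_le n).trans (le_max_right _ _)⟩
  · rintro ⟨⟨C₁, -, h₁⟩, C₂, -, h₂⟩
    have hT := isRittWith_of_norm_pow_le h₁ h₂
    exact ⟨fun l hl ↦ (hT l hl).1, _, fun l hl ↦ (hT l hl).2⟩

/-- Characterisation of Ritt operators: `T` is Ritt (i.e. every `|λ| > 1` lies in its
resolvent set and `sup_{|λ|>1} ‖(λ−1)(λ−T)⁻¹‖ < ∞`) iff `T` is power-bounded (PB) and
satisfies the discrete derivative condition (DD): `sup_{k ≥ 1} ‖k·T^{k−1}(Id−T)‖ < ∞`. -/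
theorem stmt_5 {X : Type*} [NormedAddCommGroup X] [NormedSpace ℂ X] [CompleteSpace X]
    [Nontrivial X] (T : X →L[ℂ] X) :
    ((∀ l : ℂ, 1 < ‖l‖ → l ∈ resolventSet ℂ T) ∧
      ∃ K : ℝ, ∀ l : ℂ, 1 < ‖l‖ → ‖(l - 1) • resolvent T l‖ ≤ K) ↔
    ((∃ C₁ : ℝ, 0 < C₁ ∧ ∀ n : ℕ, ‖T ^ n‖ ≤ C₁) ∧
      ∃ C₂ : ℝ, 0 < C₂ ∧ ∀ k : ℕ, 1 ≤ k → ‖(k : ℂ) • (T ^ (k - 1) * (1 - T))‖ ≤ C₂) :=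
  stmt_5_general T
end
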